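/- Let μ be a permuton such that μ([min{x_1,x_2},max{x_1,x_2}]×[min{y_1,y_2},max{y_1,y_2}]) = |x_2−x_1|·|y_2−y_1| for all pairs of points (x_1,y_1),(x_2,y_2) ∈ supp μ. Then the entire boundary of the square [0,1]² is contained in supp μ. -/

import Mathlib

open MeasureTheory Filter

noncomputable section

/-- A permuton: a Borel probability measure on `ℝ × ℝ` (supported on `[0,1]²`)
with uniform marginals. -/
def IsPermuton (μ : Measure (ℝ × ℝ)) : Prop :=
  IsProbabilityMeasure μ ∧
    (∀ x x' : ℝ, 0 ≤ x → x ≤ x' → x' ≤ 1 →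
      μ (Set.Icc x x' ×ˢ Set.Icc (0 : ℝ) 1) = ENNReal.ofReal (x' - x)) ∧
    (∀ y y' : ℝ, 0 ≤ y → y ≤ y' → y' ≤ 1 →
      μ (Set.Icc (0 : ℝ) 1 ×ˢ Set.Icc y y') = ENNReal.ofReal (y' - y))

/-- The uniform permuton: two-dimensional Lebesgue measure on `[0,1]²`. -/
def uniformPermuton : Measure (ℝ × ℝ) :=
  volume.restrict (Set.Icc (0 : ℝ) 1 ×ˢ Set.Icc (0 : ℝ) 1)

/-- The support of a Borel measure: all points each of whose open neighbourhoods has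
positive measure. -/
def measSupport (μ : Measure (ℝ × ℝ)) : Set (ℝ × ℝ) :=
  {p | ∀ U : Set (ℝ × ℝ), IsOpen U → p ∈ U → 0 < μ U}

/-- The pattern density of a `k`-permutation `π` in a measure `μ` on `ℝ × ℝ`:
the `μ^{⊗ k}`-probability that `k` sampled points, relabelled so that their
`x`-coordinates increase, have `y`-coordinates ordered according to `π`. -/
def PermutonDensity {k : ℕ} (π : Equiv.Perm (Fin k)) (μ : Measure (ℝ × ℝ)) : ℝ :=
  ((Measure.pi fun _ : Fin k => μ)
    {p : Fin k → ℝ × ℝ | ∃ σ : Equiv.Perm (Fin k),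
      StrictMono (fun i => (p (σ i)).1) ∧
        ∀ i j : Fin k, (p (σ i)).2 < (p (σ j)).2 ↔ π i < π j}).toReal

open scoped Classical in
/-- The pattern density of a `k`-permutation `π` in an `n`-permutation `Π`:
the proportion of `k`-element subsets of `Fin n` on which `Π` induces the pattern `π`
(zero when `n < k`). -/
def PatternDensity {k n : ℕ} (π : Equiv.Perm (Fin k)) (Perm : Equiv.Perm (Fin n)) : ℝ :=
  ((Finset.univ.filter fun A : Finset (Fin n) =>
      ∃ h : A.card = k, ∀ i j : Fin k,
        Perm ↑(A.orderIsoOfFin h i) < Perm ↑(A.orderIsoOfFin h j) ↔ π i < π j).card : ℝ) /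
    (n.choose k)

/-- A sequence of permutations (of varying orders) is quasirandom if the density of every
pattern `π` converges to `1/|π|!`. -/
def Quasirandom (P : ℕ → (n : ℕ) × Equiv.Perm (Fin n)) : Prop :=
  ∀ (k : ℕ) (π : Equiv.Perm (Fin k)),
    Tendsto (fun i => PatternDensity π (P i).2) atTop (nhds (1 / (Nat.factorial k : ℝ)))

/-- A set `S` of `k`-permutations is `Σ`-forcing if a sequence of permutations is quasirandom
exactly when the sum of the densities of the patterns from `S` converges to `|S|/k!`. -/
def SigmaForcing {k : ℕ} (S : Finset (Equiv.Perm (Fin k))) : Prop :=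
  ∀ P : ℕ → (n : ℕ) × Equiv.Perm (Fin n),
    Quasirandom P ↔
      Tendsto (fun i => ∑ π ∈ S, PatternDensity π (P i).2) atTop
        (nhds ((S.card : ℝ) / (Nat.factorial k : ℝ)))

/-- The `4`-permutation written in one-line notation as `(a+1)(b+1)(c+1)(d+1)`
(inputs are 0-indexed). -/
def mk4 (a b c d : Fin 4) (h : Function.Bijective ![a, b, c, d] := by decide) :
    Equiv.Perm (Fin 4) :=
  Equiv.ofBijective _ h

/-- A doubly stochastic matrix: non-negative entries, all row and column sums equal to one. -/
def IsDoublyStochastic {n : ℕ} (A : Matrix (Fin n) (Fin n) ℝ) : Prop :=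
  (∀ i j, 0 ≤ A i j) ∧ (∀ i, ∑ j, A i j = 1) ∧ (∀ j, ∑ i, A i j = 1)

/-- The step permuton `μ[A]` associated with an `n × n` doubly stochastic matrix `A`. -/
def stepPermuton {n : ℕ} (A : Matrix (Fin n) (Fin n) ℝ) : Measure (ℝ × ℝ) :=
  ∑ i : Fin n, ∑ j : Fin n,
    ENNReal.ofReal (A i j * n) •
      volume.restrict
        (Set.Ico ((i : ℝ) / n) (((i : ℝ) + 1) / n) ×ˢ
          Set.Ico ((j : ℝ) / n) (((j : ℝ) + 1) / n))

/-- The matrix `B^{ij}` (0-indexed: `p, q ∈ [n-1]`): `+1` at positions `(p,q)` and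
`(p+1,q+1)`, `-1` at positions `(p,q+1)` and `(p+1,q)`, `0` elsewhere. -/
def Bmat (n : ℕ) (p q : Fin (n - 1)) : Matrix (Fin n) (Fin n) ℝ := fun a b =>
  (if (a : ℕ) = (p : ℕ) ∧ (b : ℕ) = (q : ℕ) then 1 else 0) +
    (if (a : ℕ) = (p : ℕ) + 1 ∧ (b : ℕ) = (q : ℕ) + 1 then 1 else 0) -
    (if (a : ℕ) = (p : ℕ) ∧ (b : ℕ) = (q : ℕ) + 1 then 1 else 0) -
    (if (a : ℕ) = (p : ℕ) + 1 ∧ (b : ℕ) = (q : ℕ) then 1 else 0)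

/-- The matrix `A + ∑_{i,j} x_{ij} B^{ij}` where `A` is the `n × n` matrix with all
entries `1/n`. -/
def pertMatrix (n : ℕ) (x : Fin (n - 1) × Fin (n - 1) → ℝ) : Matrix (Fin n) (Fin n) ℝ :=
  fun a b => 1 / n + ∑ p : Fin (n - 1) × Fin (n - 1), x p * Bmat n p.1 p.2 a b

/-- The function `h_{S,n}`: the sum over `π ∈ S` of the pattern density of `π` in the
step permuton of the perturbed matrix. -/
def hSN (n : ℕ) (S : Finset (Equiv.Perm (Fin 4))) (x : Fin (n - 1) × Fin (n - 1) → ℝ) : ℝ :=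
  ∑ π ∈ S, PermutonDensity π (stepPermuton (pertMatrix n x))

open scoped Classical in
/-- The cover matrix of a set `S` of `4`-permutations: `C i j` is the number of `π ∈ S`
with `π j = i`. -/
def coverMatrix (S : Finset (Equiv.Perm (Fin 4))) : Fin 4 → Fin 4 → ℕ := fun i j =>
  (S.filter fun π => π j = i).card

/-- The eight symmetry operations on `4`-permutations. -/
def symOps : List (Equiv.Perm (Fin 4) → Equiv.Perm (Fin 4)) :=
  [fun σ => σ,
   fun σ => σ * Fin.revPerm,
   fun σ => Fin.revPerm * σ,
   fun σ => Fin.revPerm * σ * Fin.revPerm,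
   fun σ => σ⁻¹,
   fun σ => σ⁻¹ * Fin.revPerm,
   fun σ => Fin.revPerm * σ⁻¹,
   fun σ => Fin.revPerm * σ⁻¹ * Fin.revPerm]

open scoped Classical in
/-- `T` is symmetric to `S` if one of the eight symmetry operations maps `S` onto `T`. -/
def SymmetricSets (S T : Finset (Equiv.Perm (Fin 4))) : Prop :=
  ∃ op ∈ symOps, T = S.image op

end

lemma supp_eq (μ : Measure (ℝ × ℝ)) : measSupport μ = μ.support := by
  ext p
  rw [Measure.mem_support_iff_forall]
  constructor
  · intro hp U hU
    obtain ⟨V, hVU, hV, hpV⟩ := mem_nhds_iff.1 hU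
    exact lt_of_lt_of_le (hp V hV hpV) (measure_mono hVU)
  · intro hp U hU hpU
    exact hp U (hU.mem_nhds hpU)

lemma supp_closed (μ : Measure (ℝ × ℝ)) : IsClosed (measSupport μ) := by
  rw [supp_eq]; exact Measure.isClosed_support

lemma null_of_disj (μ : Measure (ℝ × ℝ)) (A : Set (ℝ × ℝ)) (hA : ∀ p ∈ A, p ∉ measSupport μ) :
    μ A = 0 := by
  have : μ (measSupport μ)ᶜ = 0 := by
    rw [supp_eq]; exact Measure.measure_compl_support
  exact measure_mono_null hA this

lemma real_le_of_supp (μ : Measure (ℝ × ℝ)) [IsProbabilityMeasure μ] (A B : Set (ℝ × ℝ))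
    (hA : ∀ p ∈ A, p ∈ measSupport μ → p ∈ B) : μ.real A ≤ μ.real B := by
  have h1 : A ⊆ B ∪ (measSupport μ)ᶜ := by
    intro p hp
    by_cases h : p ∈ measSupport μ
    · exact Or.inl (hA p hp h)
    · exact Or.inr h
  have h2 : μ.real (measSupport μ)ᶜ = 0 := by
    rw [measureReal_def, null_of_disj μ (measSupport μ)ᶜ (fun p hp => hp)]; rfl
  calc μ.real A ≤ μ.real (B ∪ (measSupport μ)ᶜ) := measureReal_mono h1
    _ ≤ μ.real B + μ.real (measSupport μ)ᶜ := measureReal_union_le _ _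
    _ = μ.real B := by rw [h2, add_zero]

/-- the property, on the level of real-valued measures -/
def RectProp (μ : Measure (ℝ × ℝ)) : Prop :=
  ∀ p ∈ measSupport μ, ∀ q ∈ measSupport μ,
      μ (Set.Icc (min p.1 q.1) (max p.1 q.1) ×ˢ Set.Icc (min p.2 q.2) (max p.2 q.2)) =
        ENNReal.ofReal (|q.1 - p.1| * |q.2 - p.2|)

lemma rect_up (μ : Measure (ℝ × ℝ)) (h : RectProp μ) (a b c d : ℝ)
    (h1 : (a, b) ∈ measSupport μ) (h2 : (c, d) ∈ measSupport μ) (hac : a ≤ c) (hbd : b ≤ d) :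
    μ.real (Set.Icc a c ×ˢ Set.Icc b d) = (c - a) * (d - b) := by
  have := h _ h1 _ h2
  simp only [min_eq_left hac, max_eq_right hac, min_eq_left hbd, max_eq_right hbd,
    abs_of_nonneg (sub_nonneg.2 hac), abs_of_nonneg (sub_nonneg.2 hbd)] at this
  rw [measureReal_def, this, ENNReal.toReal_ofReal]
  exact mul_nonneg (sub_nonneg.2 hac) (sub_nonneg.2 hbd)

lemma rect_down (μ : Measure (ℝ × ℝ)) (h : RectProp μ) (a b c d : ℝ)
    (h1 : (a, b) ∈ measSupport μ) (h2 : (c, d) ∈ measSupport μ) (hac : a ≤ c) (hbd : d ≤ b) :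
    μ.real (Set.Icc a c ×ˢ Set.Icc d b) = (c - a) * (b - d) := by
  have := h _ h1 _ h2
  simp only [min_eq_left hac, max_eq_right hac, min_eq_right hbd, max_eq_left hbd,
    abs_of_nonneg (sub_nonneg.2 hac), abs_of_nonpos (sub_nonpos.2 hbd)] at this
  rw [measureReal_def, this, ENNReal.toReal_ofReal]
  · ring
  · exact mul_nonneg (sub_nonneg.2 hac) (by linarith)

lemma M_le (μ : Measure (ℝ × ℝ)) [IsProbabilityMeasure μ] (x a b c : ℝ) :
    μ.real (Set.Icc 0 x ×ˢ Set.Icc a c) ≤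
      μ.real (Set.Icc 0 x ×ˢ Set.Icc a b) + μ.real (Set.Icc 0 x ×ˢ Set.Icc b c) := by
  refine le_trans (measureReal_mono ?_) (measureReal_union_le _ _)
  rintro ⟨s, t⟩ ⟨hs, ht⟩
  rcases le_total t b with h | h
  · exact Or.inl ⟨hs, ht.1, h⟩
  · exact Or.inr ⟨hs, h, ht.2⟩

lemma M_add (μ : Measure (ℝ × ℝ)) (hμ : IsPermuton μ) (x a b c : ℝ) (hx1 : x ≤ 1)
    (hab : a ≤ b) (hbc : b ≤ c) (hb0 : 0 ≤ b) (hb1 : b ≤ 1) :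
    μ.real (Set.Icc 0 x ×ˢ Set.Icc a c) =
      μ.real (Set.Icc 0 x ×ˢ Set.Icc a b) + μ.real (Set.Icc 0 x ×ˢ Set.Icc b c) := by
  have := hμ.1
  rw [← measureReal_union₀]
  · congr 1
    rw [← Set.prod_union, Set.Icc_union_Icc_eq_Icc hab hbc]
  · exact (measurableSet_Icc.prod measurableSet_Icc).nullMeasurableSet
  · refine measure_mono_null (t := Set.Icc (0:ℝ) 1 ×ˢ Set.Icc b b) ?_ ?_
    · rintro ⟨s, t⟩ ⟨⟨hs, ht⟩, ⟨hs', ht'⟩⟩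
      exact ⟨⟨hs.1, hs.2.trans hx1⟩, ht'.1, ht.2⟩
    · rw [hμ.2.2 b b hb0 le_rfl hb1]; simp

lemma slice (μ : Measure (ℝ × ℝ)) (hμ : IsPermuton μ) (x : ℝ) (hx0 : 0 ≤ x) (hx1 : x ≤ 1) :
    ∃ y, 0 ≤ y ∧ y ≤ 1 ∧ (x, y) ∈ measSupport μ := by
  by_contra! hne
  have hK : IsCompact (Prod.fst '' (measSupport μ ∩ (Set.Icc (0:ℝ) 1 ×ˢ Set.Icc (0:ℝ) 1))) :=
    ((isCompact_Icc.prod isCompact_Icc).inter_left (supp_closed μ)).image continuous_fst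
  have hx : x ∈ (Prod.fst '' (measSupport μ ∩ (Set.Icc (0:ℝ) 1 ×ˢ Set.Icc (0:ℝ) 1)))ᶜ := by
    rintro ⟨⟨s, t⟩, ⟨hS, hs, ht⟩, rfl⟩
    exact hne t ht.1 ht.2 hS
  obtain ⟨ε, hε, hball⟩ := Metric.isOpen_iff.1 hK.isClosed.isOpen_compl x hx
  have hlt : max 0 (x - ε/2) < min 1 (x + ε/2) := by
    simp only [lt_min_iff, max_lt_iff]
    refine ⟨⟨by norm_num, by linarith⟩, by linarith, by linarith⟩
  have h1 := hμ.2.1 (max 0 (x - ε/2)) (min 1 (x + ε/2)) (le_max_left _ _) hlt.le (min_le_left _ _)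
  rw [null_of_disj] at h1
  · have := ENNReal.ofReal_eq_zero.1 h1.symm
    linarith
  · rintro ⟨s, t⟩ ⟨⟨hs1, hs2⟩, ht⟩ hS
    simp only [max_le_iff, le_min_iff] at hs1 hs2
    refine hball (a := s) ?_ ⟨(s, t), ⟨hS, ⟨hs1.1, hs2.1⟩, ht⟩, rfl⟩
    rw [Metric.mem_ball, Real.dist_eq, abs_lt]
    constructor <;> linarith [hs1.2, hs2.2]

lemma lemA_up (μ : Measure (ℝ × ℝ)) [IsProbabilityMeasure μ] (h : RectProp μ) (δ u η : ℝ)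
    (hδ : 0 ≤ δ) (hη : 0 ≤ η) (hu : (0, u) ∈ measSupport μ) :
    μ.real (Set.Icc 0 δ ×ˢ Set.Icc u (u + η)) ≤ 3 * (δ * η) := by
  have hK : IsCompact (measSupport μ ∩ (Set.Icc 0 δ ×ˢ Set.Icc u (u + η))) :=
    (isCompact_Icc.prod isCompact_Icc).inter_left (supp_closed μ)
  have hne : (measSupport μ ∩ (Set.Icc 0 δ ×ˢ Set.Icc u (u + η))).Nonempty :=
    ⟨(0, u), hu, ⟨le_rfl, hδ⟩, le_rfl, by simpa using hη⟩
  obtain ⟨⟨a, b⟩, ⟨hp, ⟨ha0, ha1⟩, hb0, hb1⟩, hpm⟩ := hK.exists_isMaxOn hne continuous_fst.continuousOn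
  obtain ⟨⟨c, d⟩, ⟨hq, ⟨hc0, hc1⟩, hd0, hd1⟩, hqm⟩ := hK.exists_isMaxOn hne continuous_snd.continuousOn
  have hca : c ≤ a := hpm ⟨hq, ⟨hc0, hc1⟩, hd0, hd1⟩
  have hbd : b ≤ d := hqm ⟨hp, ⟨ha0, ha1⟩, hb0, hb1⟩
  simp only at ha0 ha1 hb0 hb1 hc0 hc1 hd0 hd1
  have e1 := rect_up μ h _ _ _ _ hu hp ha0 hb0
  have e2 := rect_up μ h _ _ _ _ hu hq hc0 hd0
  have e3 := rect_down μ h _ _ _ _ hq hp hca hbd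
  have hle : μ.real (Set.Icc 0 δ ×ˢ Set.Icc u (u + η)) ≤
      μ.real (Set.Icc 0 a ×ˢ Set.Icc u b ∪ Set.Icc 0 c ×ˢ Set.Icc u d ∪
        Set.Icc c a ×ˢ Set.Icc b d) := by
    apply real_le_of_supp
    rintro ⟨s, t⟩ ⟨⟨hs0, hs1⟩, ht0, ht1⟩ hS
    have hsa : s ≤ a := hpm ⟨hS, ⟨hs0, hs1⟩, ht0, ht1⟩
    have htd : t ≤ d := hqm ⟨hS, ⟨hs0, hs1⟩, ht0, ht1⟩
    rcases le_total t b with h1 | h1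
    · exact Or.inl (Or.inl ⟨⟨hs0, hsa⟩, ht0, h1⟩)
    · rcases le_total s c with h2 | h2
      · exact Or.inl (Or.inr ⟨⟨hs0, h2⟩, ht0, htd⟩)
      · exact Or.inr ⟨⟨h2, hsa⟩, h1, htd⟩
  have hle2 := hle.trans ((measureReal_union_le _ _).trans
    (add_le_add_left (measureReal_union_le _ _) _))
  rw [e1, e2, e3] at hle2
  have f1 : (a - 0) * (b - u) ≤ δ * η :=
    mul_le_mul (by linarith) (by linarith) (by linarith) hδ
  have f2 : (c - 0) * (d - u) ≤ δ * η :=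
    mul_le_mul (by linarith) (by linarith) (by linarith) hδ
  have f3 : (a - c) * (d - b) ≤ δ * η :=
    mul_le_mul (by linarith) (by linarith) (by linarith) hδ
  linarith

lemma lemA_down (μ : Measure (ℝ × ℝ)) [IsProbabilityMeasure μ] (h : RectProp μ) (δ u η : ℝ)
    (hδ : 0 ≤ δ) (hη : 0 ≤ η) (hu : (0, u) ∈ measSupport μ) :
    μ.real (Set.Icc 0 δ ×ˢ Set.Icc (u - η) u) ≤ 3 * (δ * η) := by
  have hK : IsCompact (measSupport μ ∩ (Set.Icc 0 δ ×ˢ Set.Icc (u - η) u)) :=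
    (isCompact_Icc.prod isCompact_Icc).inter_left (supp_closed μ)
  have hne : (measSupport μ ∩ (Set.Icc 0 δ ×ˢ Set.Icc (u - η) u)).Nonempty :=
    ⟨(0, u), hu, ⟨le_rfl, hδ⟩, by simpa using hη, le_rfl⟩
  obtain ⟨⟨a, b⟩, ⟨hp, ⟨ha0, ha1⟩, hb0, hb1⟩, hpm⟩ := hK.exists_isMaxOn hne continuous_fst.continuousOn
  obtain ⟨⟨c, d⟩, ⟨hq, ⟨hc0, hc1⟩, hd0, hd1⟩, hqm⟩ := hK.exists_isMinOn hne continuous_snd.continuousOn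
  have hca : c ≤ a := hpm ⟨hq, ⟨hc0, hc1⟩, hd0, hd1⟩
  have hbd : d ≤ b := hqm ⟨hp, ⟨ha0, ha1⟩, hb0, hb1⟩
  simp only at ha0 ha1 hb0 hb1 hc0 hc1 hd0 hd1
  have e1 := rect_down μ h _ _ _ _ hu hp ha0 hb1
  have e2 := rect_down μ h _ _ _ _ hu hq hc0 hd1
  have e3 := rect_up μ h _ _ _ _ hq hp hca hbd
  have hle : μ.real (Set.Icc 0 δ ×ˢ Set.Icc (u - η) u) ≤
      μ.real (Set.Icc 0 a ×ˢ Set.Icc b u ∪ Set.Icc 0 c ×ˢ Set.Icc d u ∪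
        Set.Icc c a ×ˢ Set.Icc d b) := by
    apply real_le_of_supp
    rintro ⟨s, t⟩ ⟨⟨hs0, hs1⟩, ht0, ht1⟩ hS
    have hsa : s ≤ a := hpm ⟨hS, ⟨hs0, hs1⟩, ht0, ht1⟩
    have htd : d ≤ t := hqm ⟨hS, ⟨hs0, hs1⟩, ht0, ht1⟩
    rcases le_total b t with h1 | h1
    · exact Or.inl (Or.inl ⟨⟨hs0, hsa⟩, h1, ht1⟩)
    · rcases le_total s c with h2 | h2
      · exact Or.inl (Or.inr ⟨⟨hs0, h2⟩, htd, ht1⟩)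
      · exact Or.inr ⟨⟨h2, hsa⟩, htd, h1⟩
  have hle2 := hle.trans ((measureReal_union_le _ _).trans
    (add_le_add_left (measureReal_union_le _ _) _))
  rw [e1, e2, e3] at hle2
  have f1 : (a - 0) * (u - b) ≤ δ * η :=
    mul_le_mul (by linarith) (by linarith) (by linarith) hδ
  have f2 : (c - 0) * (u - d) ≤ δ * η :=
    mul_le_mul (by linarith) (by linarith) (by linarith) hδ
  have f3 : (a - c) * (b - d) ≤ δ * η :=
    mul_le_mul (by linarith) (by linarith) (by linarith) hδ
  linarith

lemma lemB (μ : Measure (ℝ × ℝ)) (s t : ℝ)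
    (hL : ∀ y ∈ Set.Icc s t, ((0 : ℝ), y) ∉ measSupport μ) :
    ∃ ε > 0, ∀ δ < ε, μ.real (Set.Icc 0 δ ×ˢ Set.Icc s t) = 0 := by
  have hK : IsCompact (Prod.fst '' (measSupport μ ∩ (Set.Icc (0:ℝ) 1 ×ˢ Set.Icc s t))) :=
    ((isCompact_Icc.prod isCompact_Icc).inter_left (supp_closed μ)).image continuous_fst
  have hx : (0:ℝ) ∈ (Prod.fst '' (measSupport μ ∩ (Set.Icc (0:ℝ) 1 ×ˢ Set.Icc s t)))ᶜ := by
    rintro ⟨⟨x, y⟩, ⟨hS, hs, ht⟩, hx⟩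
    simp only at hx
    subst hx
    exact hL y ht hS
  obtain ⟨ε, hε, hball⟩ := Metric.isOpen_iff.1 hK.isClosed.isOpen_compl 0 hx
  refine ⟨min ε 1, lt_min hε one_pos, fun δ hδ => ?_⟩
  rw [measureReal_def, null_of_disj]
  · rfl
  · rintro ⟨x, y⟩ ⟨⟨hs1, hs2⟩, ht⟩ hS
    rw [lt_min_iff] at hδ
    simp only at hs1 hs2
    refine hball (a := x) ?_ ⟨(x, y), ⟨hS, ⟨hs1, by simp only; linarith⟩, ht⟩, rfl⟩
    rw [Metric.mem_ball, Real.dist_eq, abs_lt]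
    constructor <;> linarith

lemma lemC (μ : Measure (ℝ × ℝ)) (hμ : IsPermuton μ) (h : RectProp μ) (x u v : ℝ)
    (hx0 : 0 ≤ x) (hx1 : x ≤ 1) (hu0 : 0 ≤ u) (huv : u ≤ v) (hv1 : v ≤ 1)
    (hu : (0, u) ∈ measSupport μ) (hv : (0, v) ∈ measSupport μ) :
    μ.real (Set.Icc 0 x ×ˢ Set.Icc u v) = x * (v - u) := by
  obtain ⟨y, hy0, hy1, hy⟩ := slice μ hμ x hx0 hx1
  rcases le_total y u with h1 | h1
  · have e1 := rect_down μ h _ _ _ _ hu hy hx0 h1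
    have e2 := rect_down μ h _ _ _ _ hv hy hx0 (h1.trans huv)
    have := M_add μ hμ x y u v hx1 h1 huv hu0 (huv.trans hv1)
    linarith
  · rcases le_total y v with h2 | h2
    · have e1 := rect_up μ h _ _ _ _ hu hy hx0 h1
      have e2 := rect_down μ h _ _ _ _ hv hy hx0 h2
      have := M_add μ hμ x u y v hx1 h1 h2 hy0 hy1
      linarith
    · have e1 := rect_up μ h _ _ _ _ hu hy hx0 h1
      have e2 := rect_up μ h _ _ _ _ hv hy hx0 h2
      have := M_add μ hμ x u v y hx1 huv h2 (hu0.trans huv) hv1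
      linarith

lemma left_edge (μ : Measure (ℝ × ℝ)) (hμ : IsPermuton μ) (h : RectProp μ) (y : ℝ)
    (hy0 : 0 ≤ y) (hy1 : y ≤ 1) : ((0 : ℝ), y) ∈ measSupport μ := by
  have := hμ.1
  have hcl : IsClosed {t : ℝ | ((0:ℝ), t) ∈ measSupport μ} :=
    (supp_closed μ).preimage (by fun_prop : Continuous fun t : ℝ => ((0:ℝ), t))
  have hcpt : ∀ a b : ℝ, IsCompact ({t : ℝ | ((0:ℝ), t) ∈ measSupport μ} ∩ Set.Icc a b) :=
    fun a b => isCompact_Icc.inter_left hcl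
  -- the corners
  have hcorner : ((0:ℝ), (0:ℝ)) ∈ measSupport μ ∧ ((0:ℝ), (1:ℝ)) ∈ measSupport μ := by
    obtain ⟨w, hw0, hw1, hw⟩ := slice μ hμ 0 le_rfl zero_le_one
    obtain ⟨u, ⟨hu, hu0, hu1⟩, hum⟩ := (hcpt 0 1).exists_isLeast ⟨w, hw, hw0, hw1⟩
    obtain ⟨v, ⟨hv, hv0, hv1⟩, hvm⟩ := (hcpt 0 1).exists_isGreatest ⟨w, hw, hw0, hw1⟩
    have huv : u ≤ v := hum ⟨hv, hv0, hv1⟩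
    have key : ∀ η > 0, 1 ≤ (v - u) + 6 * η := by
      intro η hη
      obtain ⟨ε1, hε1, h1⟩ := lemB μ 0 (u - η) (fun t ht hS => by
        have := hum ⟨hS, ht.1, by linarith [ht.2]⟩
        linarith [ht.2])
      obtain ⟨ε2, hε2, h2⟩ := lemB μ (v + η) 1 (fun t ht hS => by
        have := hvm ⟨hS, by linarith [ht.1], ht.2⟩
        linarith [ht.1])
      obtain ⟨δ, hδ0, hδ⟩ := exists_between (lt_min one_pos (lt_min hε1 hε2))
      simp only [lt_min_iff] at hδ
      have a0 : μ.real (Set.Icc 0 δ ×ˢ Set.Icc (0:ℝ) 1) = δ := by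
        rw [measureReal_def, hμ.2.1 0 δ le_rfl hδ0.le hδ.1.le, ENNReal.toReal_ofReal] <;> linarith
      have b1 := M_le μ δ 0 (u - η) 1
      have b2 := M_le μ δ (u - η) u 1
      have b3 := M_le μ δ u v 1
      have b4 := M_le μ δ v (v + η) 1
      have c1 := h1 δ hδ.2.1
      have c2 := h2 δ hδ.2.2
      have c3 := lemA_down μ h δ u η hδ0.le hη.le hu
      have c4 := lemA_up μ h δ v η hδ0.le hη.le hv
      have c5 := lemC μ hμ h δ u v hδ0.le hδ.1.le hu0 huv hv1 hu hv
      have : δ * 1 ≤ δ * ((v - u) + 6 * η) := by linarith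
      exact le_of_mul_le_mul_left this hδ0
    have h1 : 1 ≤ v - u := by
      by_contra! hlt
      have := key ((1 - (v - u)) / 7) (by linarith)
      linarith
    have hu' : u = 0 := by linarith
    have hv' : v = 1 := by linarith
    subst hu' hv'
    exact ⟨hu, hv⟩
  by_contra hy
  obtain ⟨u, ⟨hu, hu0, hu1⟩, hum⟩ :=
    (hcpt 0 y).exists_isGreatest ⟨0, hcorner.1, le_rfl, hy0⟩
  obtain ⟨v, ⟨hv, hv0, hv1⟩, hvm⟩ :=
    (hcpt y 1).exists_isLeast ⟨1, hcorner.2, hy1, le_rfl⟩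
  have huy : u < y := lt_of_le_of_ne hu1 (by rintro rfl; exact hy hu)
  have huv : u < v := by linarith
  obtain ⟨η, hη⟩ : ∃ η, η = (v - u) / 7 := ⟨_, rfl⟩
  have hη0 : 0 < η := by rw [hη]; linarith
  obtain ⟨ε1, hε1, h1⟩ := lemB μ (u + η) (v - η) (fun t ht hS => by
    rcases le_total t y with h1 | h1
    · have := hum ⟨hS, by linarith [ht.1], h1⟩
      linarith [ht.1]
    · have := hvm ⟨hS, h1, by linarith [ht.2]⟩
      linarith [ht.2])
  obtain ⟨δ, hδ0, hδ⟩ := exists_between (lt_min one_pos hε1)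
  simp only [lt_min_iff] at hδ
  have b1 := M_le μ δ u (u + η) v
  have b2 := M_le μ δ (u + η) (v - η) v
  have c1 := h1 δ hδ.2
  have c3 := lemA_down μ h δ v η hδ0.le hη0.le hv
  have c4 := lemA_up μ h δ u η hδ0.le hη0.le hu
  have c5 := lemC μ hμ h δ u v hδ0.le hδ.1.le hu0 huv.le hv1 hu hv
  have : δ * (v - u) ≤ δ * (6 * η) := by linarith
  have := le_of_mul_le_mul_left this hδ0
  linarith

lemma map_app (μ : Measure (ℝ × ℝ)) (e : (ℝ × ℝ) ≃ₜ (ℝ × ℝ)) (A : Set (ℝ × ℝ)) :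
    μ.map e A = μ (e ⁻¹' A) := e.toMeasurableEquiv.map_apply (μ := μ) A

lemma supp_map (μ : Measure (ℝ × ℝ)) (e : (ℝ × ℝ) ≃ₜ (ℝ × ℝ)) (p : ℝ × ℝ) :
    e p ∈ measSupport (μ.map e) ↔ p ∈ measSupport μ := by
  constructor
  · intro hp U hU hpU
    have := hp (e '' U) (e.isOpenMap U hU) ⟨p, hpU, rfl⟩
    rwa [map_app, Set.preimage_image_eq U e.injective] at this
  · intro hp U hU hpU
    rw [map_app]
    exact hp _ (hU.preimage e.continuous) hpU

/-- reflection in the first coordinate -/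
def reflX : (ℝ × ℝ) ≃ₜ (ℝ × ℝ) := (Homeomorph.subLeft (1:ℝ)).prodCongr (Homeomorph.refl ℝ)

lemma reflX_app (x y : ℝ) : reflX (x, y) = (1 - x, y) := rfl

lemma reflX_pre (a b c d : ℝ) : reflX ⁻¹' (Set.Icc a b ×ˢ Set.Icc c d) =
    Set.Icc (1 - b) (1 - a) ×ˢ Set.Icc c d := by
  ext ⟨x, y⟩
  simp only [Set.mem_preimage, reflX_app, Set.mem_prod, Set.mem_Icc]
  constructor <;> rintro ⟨⟨h1, h2⟩, h3⟩ <;> exact ⟨⟨by linarith, by linarith⟩, h3⟩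

lemma reflX_perm (μ : Measure (ℝ × ℝ)) (hμ : IsPermuton μ) : IsPermuton (μ.map reflX) := by
  have := hμ.1
  refine ⟨Measure.isProbabilityMeasure_map reflX.continuous.aemeasurable, ?_, ?_⟩
  · intro x x' h0 h1 h2
    rw [map_app, reflX_pre, hμ.2.1 _ _ (by linarith) (by linarith) (by linarith)]
    congr 1; ring
  · intro x x' h0 h1 h2
    rw [map_app, reflX_pre, sub_zero, sub_self, hμ.2.2 _ _ h0 h1 h2]

lemma reflX_rect (μ : Measure (ℝ × ℝ)) (h : RectProp μ) : RectProp (μ.map reflX) := by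
  rintro ⟨a, b⟩ hp ⟨c, d⟩ hq
  have hp' : (1 - a, b) ∈ measSupport μ := by
    rw [← supp_map μ reflX, reflX_app, sub_sub_cancel]; exact hp
  have hq' : (1 - c, d) ∈ measSupport μ := by
    rw [← supp_map μ reflX, reflX_app, sub_sub_cancel]; exact hq
  have := h _ hp' _ hq'
  rw [map_app, reflX_pre]
  simp only at this ⊢
  rw [← min_sub_sub_left, ← max_sub_sub_left, this, abs_sub_comm (1 - c) (1 - a)]
  congr 3; ring

lemma swap_pre (a b c d : ℝ) : Homeomorph.prodComm ℝ ℝ ⁻¹' (Set.Icc a b ×ˢ Set.Icc c d) =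
    Set.Icc c d ×ˢ Set.Icc a b := by
  ext ⟨x, y⟩
  simp [and_comm]

lemma swap_perm (μ : Measure (ℝ × ℝ)) (hμ : IsPermuton μ) :
    IsPermuton (μ.map (Homeomorph.prodComm ℝ ℝ)) := by
  have := hμ.1
  refine ⟨Measure.isProbabilityMeasure_map (Homeomorph.prodComm ℝ ℝ).continuous.aemeasurable, ?_, ?_⟩
  · intro x x' h0 h1 h2
    rw [map_app, swap_pre, hμ.2.2 _ _ h0 h1 h2]
  · intro x x' h0 h1 h2
    rw [map_app, swap_pre, hμ.2.1 _ _ h0 h1 h2]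

lemma swap_rect (μ : Measure (ℝ × ℝ)) (h : RectProp μ) :
    RectProp (μ.map (Homeomorph.prodComm ℝ ℝ)) := by
  rintro ⟨a, b⟩ hp ⟨c, d⟩ hq
  have hp' : (b, a) ∈ measSupport μ := by
    rw [← supp_map μ (Homeomorph.prodComm ℝ ℝ)]; exact hp
  have hq' : (d, c) ∈ measSupport μ := by
    rw [← supp_map μ (Homeomorph.prodComm ℝ ℝ)]; exact hq
  rw [map_app, swap_pre, h _ hp' _ hq', mul_comm]

lemma side_edges (μ : Measure (ℝ × ℝ)) (hμ : IsPermuton μ) (h : RectProp μ) (x y : ℝ)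
    (hx : x = 0 ∨ x = 1) (hy0 : 0 ≤ y) (hy1 : y ≤ 1) : (x, y) ∈ measSupport μ := by
  rcases hx with rfl | rfl
  · exact left_edge μ hμ h y hy0 hy1
  · rw [← supp_map μ reflX, reflX_app, sub_self]
    exact left_edge _ (reflX_perm μ hμ) (reflX_rect μ h) y hy0 hy1

theorem statement_3 (μ : Measure (ℝ × ℝ)) (hμ : IsPermuton μ)
    (h : ∀ p ∈ measSupport μ, ∀ q ∈ measSupport μ,
      μ (Set.Icc (min p.1 q.1) (max p.1 q.1) ×ˢ Set.Icc (min p.2 q.2) (max p.2 q.2)) =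
        ENNReal.ofReal (|q.1 - p.1| * |q.2 - p.2|)) :
    frontier (Set.Icc (0 : ℝ) 1 ×ˢ Set.Icc (0 : ℝ) 1) ⊆ measSupport μ := by
  rintro ⟨x, y⟩ hxy
  rw [frontier_prod_eq, closure_Icc, frontier_Icc zero_le_one] at hxy
  rcases hxy with ⟨hx, hy⟩ | ⟨hx, hy⟩
  · rw [← supp_map μ (Homeomorph.prodComm ℝ ℝ)]
    exact side_edges _ (swap_perm μ hμ) (swap_rect μ h) y x hy hx.1 hx.2
  · exact side_edges μ hμ h x y hx hy.1 hy.2
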